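/- Ramseyan pigeonhole principle: for every sequence σ over a finite semigroup Γ there exists a position i such that for every k there exists j ≥ k with i merging with j in σ (i.e., i has an infinite merging class). -/

import Mathlib

namespace Buechi

/-- Nonempty finite strings over `α`, given as a head together with a tail. -/
abbrev NStr (α : Type*) : Type _ := α × List α

/-- The list of symbols of a nonempty string. -/
def NStr.toList {α : Type*} (s : NStr α) : List α := s.1 :: s.2

/-- The color of a nonempty string over a semigroup: the product of its symbols. -/
def col {Γ : Type*} [Semigroup Γ] (s : NStr Γ) : Γ := s.2.foldl (· * ·) s.1

/-- The string `σ[i,j) = σ i, σ (i+1), …, σ (j-1)` (meaningful for `i < j`). -/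
def seg {α : Type*} (σ : ℕ → α) (i j : ℕ) : NStr α :=
  (σ i, (List.range' (i + 1) (j - i - 1)).map σ)

/-- Position `i` merges with position `j` in `σ`: there is a `k` with `i < k`,
`j < k` and `col σ[i,k) = col σ[j,k)`. -/
def Merges {Γ : Type*} [Semigroup Γ] (σ : ℕ → Γ) (i j : ℕ) : Prop :=
  ∃ k, i < k ∧ j < k ∧ col (seg σ i k) = col (seg σ j k)

/-- An ultrafilter finer than `l` gives each `i` a limit color `g i`. Two points with the same
limit color have equal colors at almost every `k`, and some fiber of `g` is infinite. -/
theorem ramseyan_pigeonhole_general {ι κ Γ : Type*} [Infinite ι] [Finite Γ] (l : Filter κ)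
    [l.NeBot] (c : ι → κ → Γ) : ∃ i, {j | ∃ᶠ k in l, c i k = c j k}.Infinite := by
  have hlimit (i : ι) : ∃ γ, ∀ᶠ k in Ultrafilter.of l, c i k = γ :=
    Ultrafilter.eventually_exists_iff.mp (.of_forall fun k => ⟨c i k, rfl⟩)
  choose g hg using hlimit
  obtain ⟨γ, hγ⟩ := Finite.exists_infinite_fiber g
  have hfiber : (g ⁻¹' {γ}).Infinite := Set.infinite_coe_iff.mp hγ
  obtain ⟨i, hi : g i = γ⟩ := hfiber.nonempty
  refine ⟨i, hfiber.mono fun j (hj : g j = γ) => ?_⟩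
  have hij : ∀ᶠ k in Ultrafilter.of l, c i k = c j k := by
    filter_upwards [hg i, hg j] with k hik hjk
    rw [hik, hjk, hi, hj]
  exact hij.frequently.filter_mono (Ultrafilter.of_le l)

theorem merges_of_frequently_col_eq {Γ : Type*} [Semigroup Γ] {σ : ℕ → Γ} {i j : ℕ}
    (h : ∃ᶠ k in Filter.atTop, col (seg σ i k) = col (seg σ j k)) : Merges σ i j := by
  obtain ⟨k, hk, hcol⟩ := Filter.frequently_atTop'.mp h (max i j)
  exact ⟨k, (le_max_left i j).trans_lt hk, (le_max_right i j).trans_lt hk, hcol⟩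

/-- Ramseyan pigeonhole principle: every sequence over a finite semigroup has a
position with an infinite merging class. -/
theorem ramseyan_pigeonhole {Γ : Type*} [Fintype Γ] [Semigroup Γ] (σ : ℕ → Γ) :
    ∃ i : ℕ, ∀ k : ℕ, ∃ j : ℕ, k ≤ j ∧ Merges σ i j := by
  obtain ⟨i, hi⟩ := ramseyan_pigeonhole_general Filter.atTop fun i k => col (seg σ i k)
  refine ⟨i, fun k => ?_⟩
  obtain ⟨j, hij, hkj⟩ := hi.exists_gt k
  exact ⟨j, hkj.le, merges_of_frequently_col_eq hij⟩

end Buechi
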